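/- arXiv:2409.13680 — 2 statements merged into one kernel-verified Lean document; each statement's English description precedes it below -/
import Mathlib

section
/- Let G be a finite simple graph with n vertices and e edges, minimum degree δ ≥ 1, and independence number β. Then F(G) ≥ (n − β)·δ³ + δ·(2β²δ² − e²)/β, with equality if and only if G is a regular balanced bipartite graph. -/
open Finset

/-- The first Zagreb index of a graph: the sum of the squares of the vertex degrees. -/
def zagreb1 {V : Type*} [Fintype V] (G : SimpleGraph V) [DecidableRel G.Adj] : ℝ :=
  ∑ u, (G.degree u : ℝ) ^ 2

/-- The forgotten topological index of a graph: the sum of the cubes of the vertex degrees. -/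
def forgottenIndex {V : Type*} [Fintype V] (G : SimpleGraph V) [DecidableRel G.Adj] : ℝ :=
  ∑ u, (G.degree u : ℝ) ^ 3

/-- The inverse degree of a graph: the sum of the reciprocals of the vertex degrees. -/
noncomputable def invDegree {V : Type*} [Fintype V] (G : SimpleGraph V) [DecidableRel G.Adj] : ℝ :=
  ∑ u, 1 / (G.degree u : ℝ)

/-- The independence number of a graph: the largest cardinality of a set of pairwise
nonadjacent vertices. -/
noncomputable def indepNum {V : Type*} [Fintype V] (G : SimpleGraph V) : ℕ :=
  sSup {k | ∃ s : Finset V, s.card = k ∧ ∀ u ∈ s, ∀ v ∈ s, ¬ G.Adj u v}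

/-- A graph is a regular balanced bipartite graph if its vertices can be partitioned into
two parts of equal size with every edge joining the two parts, and all vertices have the
same degree. -/
def IsRegularBalancedBipartite {V : Type*} [Fintype V] (G : SimpleGraph V) [DecidableRel G.Adj] : Prop :=
  ∃ (A : Finset V) (r : ℕ), 2 * A.card = Fintype.card V ∧
    (∀ u v, G.Adj u v → (u ∈ A ↔ v ∉ A)) ∧ G.IsRegularOfDegree r

/-- A graph is `k`-connected if it has more than `k` vertices and removing any set of
fewer than `k` vertices leaves a connected graph. -/
def IsKConnected {V : Type*} [Fintype V] (G : SimpleGraph V) (k : ℕ) : Prop :=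
  k < Fintype.card V ∧
    ∀ S : Finset V, S.card < k → (G.induce (↑S : Set V)ᶜ).Connected

/-- A graph is traceable if it has a Hamiltonian path. -/
def IsTraceable {V : Type*} [DecidableEq V] (G : SimpleGraph V) : Prop :=
  ∃ (u v : V) (p : G.Walk u v), p.IsHamiltonian

/-!
Write `n`, `e`, `δ`, `β` as in the theorem. The edges at distinct vertices of an independent set `s`
are distinct, so the degrees over `s` sum to at most `e`, and to exactly `e` when `s` meets every
edge; for `s` of size `β` this gives `β δ ≤ e`. The right-hand side of the theorem is
`n δ³ - δ (e² - (β δ)²) / β`, hence at most `n δ³`, which is at most `F(G)`. Equality therefore means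
that `G` is `δ`-regular and `e = β δ`: a maximum independent set then meets every edge, so `G` is
bipartite, and counting the edges of a regular bipartite graph shows that it is balanced.
-/

section IndepSet

variable {V : Type*} {G : SimpleGraph V} {s : Finset V}

theorem isIndepSet_coe_iff_forall_not_adj :
    G.IsIndepSet (s : Set V) ↔ ∀ u ∈ s, ∀ v ∈ s, ¬ G.Adj u v :=
  ⟨fun h _ hu _ hv huv => h hu hv huv.ne huv, fun h _ hu _ hv _ => h _ hu _ hv⟩

theorem isIndepSet_and_isVertexCover_iff {A : Set V} :
    G.IsIndepSet A ∧ G.IsVertexCover A ↔ ∀ u v, G.Adj u v → (u ∈ A ↔ v ∉ A) := by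
  refine ⟨fun ⟨hind, hcov⟩ u v huv => ⟨fun hu hv => hind hu hv huv.ne huv, fun hv => ?_⟩,
    fun h => ⟨fun u hu v hv _ huv => (h u v huv).1 hu hv, fun u v huv => ?_⟩⟩
  · exact (hcov huv).resolve_right hv
  · exact or_iff_not_imp_right.2 (h u v huv).2

theorem indepNum_eq_simpleGraph_indepNum [Fintype V] : indepNum G = G.indepNum := by
  simp only [indepNum, SimpleGraph.indepNum, SimpleGraph.isNIndepSet_iff,
    isIndepSet_coe_iff_forall_not_adj, and_comm]

theorem card_le_indepNum_of_isIndepSet [Fintype V] (hs : G.IsIndepSet (s : Set V)) :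
    #s ≤ indepNum G :=
  indepNum_eq_simpleGraph_indepNum (G := G) ▸ hs.card_le_indepNum

theorem exists_isIndepSet_card_eq_indepNum [Fintype V] (G : SimpleGraph V) :
    ∃ s : Finset V, G.IsIndepSet (s : Set V) ∧ #s = indepNum G := by
  obtain ⟨s, hs⟩ := G.exists_isNIndepSet_indepNum
  exact ⟨s, hs.isIndepSet, hs.card_eq.trans indepNum_eq_simpleGraph_indepNum.symm⟩

theorem indepNum_pos [Fintype V] [Nonempty V] (G : SimpleGraph V) : 0 < indepNum G := by
  obtain ⟨v⟩ := ‹Nonempty V›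
  have hv : G.IsIndepSet (({v} : Finset V) : Set V) := by simp
  exact card_le_indepNum_of_isIndepSet hv

end IndepSet

section DegreeSum

variable {V : Type*} {G : SimpleGraph V} {s : Finset V}

theorem sum_degree_eq_card_biUnion_incidenceFinset [DecidableEq V] [G.LocallyFinite]
    (hs : G.IsIndepSet (s : Set V)) :
    ∑ u ∈ s, G.degree u = #(s.biUnion fun u => G.incidenceFinset u) := by
  rw [card_biUnion]
  · simp only [SimpleGraph.card_incidenceFinset_eq_degree]
  · intro u hu v hv huv
    rw [Function.onFun, ← disjoint_coe, SimpleGraph.coe_incidenceFinset,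
      SimpleGraph.coe_incidenceFinset, Set.disjoint_iff_inter_eq_empty]
    exact G.incidenceSet_inter_incidenceSet_of_not_adj (hs hu hv huv) huv

theorem biUnion_incidenceFinset_subset_edgeFinset [DecidableEq V] [G.LocallyFinite]
    [Fintype G.edgeSet] : (s.biUnion fun u => G.incidenceFinset u) ⊆ G.edgeFinset :=
  biUnion_subset.2 fun u _ => G.incidenceFinset_subset u

theorem biUnion_incidenceFinset_eq_edgeFinset_iff [DecidableEq V] [G.LocallyFinite]
    [Fintype G.edgeSet] :
    (s.biUnion fun u => G.incidenceFinset u) = G.edgeFinset ↔ G.IsVertexCover (s : Set V) := by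
  have hcover : G.edgeFinset ⊆ s.biUnion (fun u => G.incidenceFinset u) ↔
      G.IsVertexCover (s : Set V) := by
    simp only [subset_iff, Sym2.forall, SimpleGraph.mem_edgeFinset, SimpleGraph.mem_edgeSet,
      mem_biUnion, SimpleGraph.mem_incidenceFinset, SimpleGraph.IsVertexCover, mem_coe]
    refine forall₂_congr fun u v => forall_congr' fun huv => ?_
    simp [SimpleGraph.incidenceSet, huv, and_or_left, exists_or]
  rw [← hcover, subset_antisymm_iff, and_iff_right biUnion_incidenceFinset_subset_edgeFinset]

theorem sum_degree_le_card_edgeFinset_of_isIndepSet [G.LocallyFinite] [Fintype G.edgeSet]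
    (hs : G.IsIndepSet (s : Set V)) : ∑ u ∈ s, G.degree u ≤ #G.edgeFinset := by
  classical
  rw [sum_degree_eq_card_biUnion_incidenceFinset hs]
  exact card_le_card biUnion_incidenceFinset_subset_edgeFinset

theorem sum_degree_eq_card_edgeFinset_iff_isVertexCover [G.LocallyFinite] [Fintype G.edgeSet]
    (hs : G.IsIndepSet (s : Set V)) :
    ∑ u ∈ s, G.degree u = #G.edgeFinset ↔ G.IsVertexCover (s : Set V) := by
  classical
  rw [sum_degree_eq_card_biUnion_incidenceFinset hs, ← biUnion_incidenceFinset_eq_edgeFinset_iff]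
  exact ⟨fun h => eq_of_subset_of_card_le biUnion_incidenceFinset_subset_edgeFinset h.ge,
    congrArg card⟩

theorem card_mul_eq_card_edgeFinset_iff_isVertexCover [G.LocallyFinite] [Fintype G.edgeSet] {r : ℕ}
    (hr : G.IsRegularOfDegree r) (hs : G.IsIndepSet (s : Set V)) :
    #s * r = #G.edgeFinset ↔ G.IsVertexCover (s : Set V) := by
  rw [← sum_degree_eq_card_edgeFinset_iff_isVertexCover hs]
  simp only [hr.degree_eq, sum_const, smul_eq_mul]

theorem two_mul_card_eq_card_of_isVertexCover [Fintype V] [DecidableRel G.Adj] {r : ℕ}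
    (hr : G.IsRegularOfDegree r) (hr₀ : r ≠ 0) (hs : G.IsIndepSet (s : Set V))
    (hcov : G.IsVertexCover (s : Set V)) : 2 * #s = Fintype.card V := by
  classical
  refine Nat.eq_of_mul_eq_mul_right (Nat.pos_of_ne_zero hr₀) ?_
  calc 2 * #s * r = 2 * #G.edgeFinset := by
        rw [mul_assoc, (card_mul_eq_card_edgeFinset_iff_isVertexCover hr hs).2 hcov]
    _ = ∑ v, G.degree v := G.sum_degrees_eq_twice_card_edges.symm
    _ = Fintype.card V * r := by
        simp only [hr.degree_eq, sum_const, smul_eq_mul, card_univ]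

end DegreeSum

section MinDegree

variable {V : Type*} [Fintype V] (G : SimpleGraph V) [DecidableRel G.Adj]

variable {G} in
theorem nonempty_of_minDegree_pos (hδ : 0 < G.minDegree) : Nonempty V :=
  not_isEmpty_iff.1 fun _ => hδ.ne' G.minDegree_of_subsingleton

theorem card_mul_minDegree_pow_le_sum_degree_pow {R : Type*} [Semiring R] [PartialOrder R]
    [IsOrderedRing R] (s : Finset V) (k : ℕ) :
    #s * (G.minDegree : R) ^ k ≤ ∑ u ∈ s, (G.degree u : R) ^ k := by
  rw [← nsmul_eq_mul]
  exact s.card_nsmul_le_sum _ _ fun u _ =>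
    pow_le_pow_left₀ (Nat.cast_nonneg _) (Nat.mono_cast (G.minDegree_le_degree u)) k

theorem card_mul_minDegree_pow_eq_sum_degree_pow_iff {R : Type*} [Semiring R] [LinearOrder R]
    [IsStrictOrderedRing R] (s : Finset V) {k : ℕ} (hk : k ≠ 0) :
    #s * (G.minDegree : R) ^ k = ∑ u ∈ s, (G.degree u : R) ^ k ↔
      ∀ u ∈ s, G.degree u = G.minDegree := by
  rw [← nsmul_eq_mul, ← sum_const, sum_eq_sum_iff_of_le fun u _ =>
    pow_le_pow_left₀ (Nat.cast_nonneg _) (Nat.cast_le.2 (G.minDegree_le_degree u)) k]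
  refine forall₂_congr fun u _ => ?_
  rw [pow_left_inj₀ (Nat.cast_nonneg _) (Nat.cast_nonneg _) hk, Nat.cast_inj, eq_comm]

theorem card_mul_minDegree_cube_le_forgottenIndex :
    (Fintype.card V : ℝ) * (G.minDegree : ℝ) ^ 3 ≤ forgottenIndex G :=
  card_mul_minDegree_pow_le_sum_degree_pow G univ 3

theorem card_mul_minDegree_cube_eq_forgottenIndex_iff :
    (Fintype.card V : ℝ) * (G.minDegree : ℝ) ^ 3 = forgottenIndex G ↔
      G.IsRegularOfDegree G.minDegree :=
  (card_mul_minDegree_pow_eq_sum_degree_pow_iff G univ three_ne_zero).trans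
    ⟨fun h u => h u (mem_univ u), fun h u _ => h u⟩

theorem indepNum_mul_minDegree_le_card_edgeFinset [Fintype G.edgeSet] :
    indepNum G * G.minDegree ≤ #G.edgeFinset := by
  obtain ⟨s, hs, hcard⟩ := exists_isIndepSet_card_eq_indepNum G
  calc indepNum G * G.minDegree ≤ ∑ u ∈ s, G.degree u := by
        simpa [hcard] using card_mul_minDegree_pow_le_sum_degree_pow (R := ℕ) G s 1
    _ ≤ #G.edgeFinset := sum_degree_le_card_edgeFinset_of_isIndepSet hs

theorem isRegularBalancedBipartite_iff [Fintype G.edgeSet] (hδ : 0 < G.minDegree) :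
    IsRegularBalancedBipartite G ↔
      G.IsRegularOfDegree G.minDegree ∧ indepNum G * G.minDegree = #G.edgeFinset := by
  have := nonempty_of_minDegree_pos hδ
  constructor
  · rintro ⟨A, r, -, hbip, hr⟩
    obtain ⟨hind, hcov⟩ := isIndepSet_and_isVertexCover_iff.2 hbip
    obtain rfl : G.minDegree = r := hr.minDegree_eq
    refine ⟨hr, (indepNum_mul_minDegree_le_card_edgeFinset G).antisymm ?_⟩
    rw [← (card_mul_eq_card_edgeFinset_iff_isVertexCover hr hind).2 hcov]
    exact Nat.mul_le_mul_right _ (card_le_indepNum_of_isIndepSet hind)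
  · rintro ⟨hreg, he⟩
    obtain ⟨s, hs, hcard⟩ := exists_isIndepSet_card_eq_indepNum G
    have hcov := (card_mul_eq_card_edgeFinset_iff_isVertexCover hreg hs).1 (hcard ▸ he)
    exact ⟨s, G.minDegree, two_mul_card_eq_card_of_isVertexCover hreg hδ.ne' hs hcov,
      isIndepSet_and_isVertexCover_iff.1 ⟨hs, hcov⟩, hreg⟩

end MinDegree

section ForgottenBound

variable {K : Type*} [Field K] {n β δ e : K}

/-- The lower bound for the forgotten index of a graph with `n` vertices, independence number `β`,
minimum degree `δ` and `e` edges, as a function of parameters in a field. -/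
def forgottenBound (n β δ e : K) : K :=
  (n - β) * δ ^ 3 + δ * (2 * β ^ 2 * δ ^ 2 - e ^ 2) / β

theorem forgottenBound_eq_sub (hβ : β ≠ 0) :
    forgottenBound n β δ e = n * δ ^ 3 - δ * (e ^ 2 - (β * δ) ^ 2) / β := by
  rw [forgottenBound]
  field_simp
  ring

variable [LinearOrder K] [IsStrictOrderedRing K]

theorem forgottenBound_le_mul_cube (hβ : 0 < β) (hδ : 0 ≤ δ) (he : β * δ ≤ e) :
    forgottenBound n β δ e ≤ n * δ ^ 3 := by
  have hsq : (β * δ) ^ 2 ≤ e ^ 2 := pow_le_pow_left₀ (mul_nonneg hβ.le hδ) he 2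
  rw [forgottenBound_eq_sub hβ.ne']
  exact sub_le_self _ (div_nonneg (mul_nonneg hδ (sub_nonneg.2 hsq)) hβ.le)

theorem forgottenBound_eq_mul_cube_iff (hβ : 0 < β) (hδ : 0 < δ) (he : 0 ≤ e) :
    forgottenBound n β δ e = n * δ ^ 3 ↔ β * δ = e := by
  rw [forgottenBound_eq_sub hβ.ne', sub_eq_self, div_eq_zero_iff, or_iff_left hβ.ne', mul_eq_zero,
    or_iff_right hδ.ne', sub_eq_zero, pow_left_inj₀ he (mul_pos hβ hδ).le two_ne_zero, eq_comm]

end ForgottenBound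

/-- For a graph `G` with `n` vertices, `e` edges, minimum degree `δ ≥ 1`, and independence
number `β`: `F(G) ≥ (n − β)δ³ + δ(2β²δ² − e²)/β`, with equality iff `G` is a regular
balanced bipartite graph. -/
theorem stmt2 {V : Type*} [Fintype V] [DecidableEq V] (G : SimpleGraph V) [DecidableRel G.Adj]
    (hδ : 1 ≤ G.minDegree) :
    forgottenIndex G ≥ ((Fintype.card V : ℝ) - indepNum G) * (G.minDegree : ℝ) ^ 3
        + (G.minDegree : ℝ) * (2 * (indepNum G : ℝ) ^ 2 * (G.minDegree : ℝ) ^ 2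
            - (G.edgeFinset.card : ℝ) ^ 2) / indepNum G ∧
    (forgottenIndex G = ((Fintype.card V : ℝ) - indepNum G) * (G.minDegree : ℝ) ^ 3
        + (G.minDegree : ℝ) * (2 * (indepNum G : ℝ) ^ 2 * (G.minDegree : ℝ) ^ 2
            - (G.edgeFinset.card : ℝ) ^ 2) / indepNum G
      ↔ IsRegularBalancedBipartite G) := by
  have := nonempty_of_minDegree_pos hδ
  have hβ : (0 : ℝ) < indepNum G := Nat.cast_pos.2 (indepNum_pos G)
  have hδ' : (0 : ℝ) < G.minDegree := Nat.cast_pos.2 hδ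
  have he : (indepNum G : ℝ) * G.minDegree ≤ #G.edgeFinset :=
    mod_cast indepNum_mul_minDegree_le_card_edgeFinset G
  have hbound := forgottenBound_le_mul_cube (n := (Fintype.card V : ℝ)) hβ hδ'.le he
  have hbound_eq := forgottenBound_eq_mul_cube_iff (n := (Fintype.card V : ℝ)) hβ hδ'
    (Nat.cast_nonneg #G.edgeFinset)
  have hF := card_mul_minDegree_cube_le_forgottenIndex G
  refine ⟨hbound.trans hF, ?_⟩
  rw [isRegularBalancedBipartite_iff G hδ, ← card_mul_minDegree_cube_eq_forgottenIndex_iff,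
    ← Nat.cast_inj (R := ℝ), Nat.cast_mul, ← hbound_eq]
  exact ⟨fun h => ⟨hF.antisymm (h.le.trans hbound), hbound.antisymm (hF.trans h.le)⟩,
    fun ⟨hregular, hedges⟩ => (hedges.trans hregular).symm⟩
end

section
/- Let G be a k-connected (k ≥ 2) finite simple graph with n ≥ 3 vertices, e edges, minimum degree δ, and maximum degree Δ. If Z₁(G) ≥ (n − k − 1)·Δ² + e²/(2(k + 1)) + (k + 1)·Δ³/(2δ), then G is Hamiltonian. -/
open Finset

/-!
Let `C` be a longest cycle missing a vertex `x`, and call a vertex of `C` attached if it is adjacent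
to the component of `x` outside of `C`. By `k`-connectedness at least `k` vertices are attached, and
by maximality of `C` their successors on `C` form, together with `x`, an independent set. A
non-Hamiltonian `G` therefore has an independent set `I` of size `k + 1` (Chvátal–Erdős).

Every edge meets `I` in at most one vertex, so the degrees in `I` sum to at most `e`, and
`Z₁ ≤ (n - k - 1) Δ² + Δ e`. On the other hand `Δ e ≤ e² / (2 (k + 1)) + (k + 1) Δ² / 2` by AM-GM,
and `Δ² ≤ Δ³ / δ`. The hypothesis thus forces equality everywhere: `G` is regular and bipartite with
parts `I`, `Iᶜ` of size `k + 1`. Since its degree is at least `k`, it contains a complete bipartite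
graph minus a perfect matching, which is Hamiltonian because `k + 1 ≥ 3`.
-/

section Cycles

open SimpleGraph

variable {V : Type*} {G : SimpleGraph V} {C : Cycle V} {u v a b : V}

lemma chain_coe_support_iff (p : G.Walk u v) :
    (p.support : Cycle V).Chain G.Adj ↔ G.Adj v u := by
  rw [Cycle.chain_ne_nil G.Adj p.support_ne_nil, List.isChain_cons, p.getLast_support,
    List.head?_eq_some_head p.support_ne_nil, p.head_support]
  simp [p.isChain_adj_support]

lemma exists_walk_eq_coe_support (hC : C.Chain G.Adj) (ha : a ∈ C) :
    ∃ (b : V) (p : G.Walk b a), C = p.support := by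
  induction C using Quotient.inductionOn' with
  | h l =>
  obtain ⟨l₁, l₂, rfl⟩ := List.append_of_mem (Cycle.mem_coe_iff.1 ha)
  have hne : l₂ ++ (l₁ ++ [a]) ≠ [] := by simp
  have hrot : ((l₁ ++ a :: l₂ : List V) : Cycle V) = (l₂ ++ (l₁ ++ [a]) : List V) := by
    rw [Cycle.coe_eq_coe]
    simpa using List.isRotated_append (l := l₁ ++ [a]) (l' := l₂)
  rw [Cycle.mk''_eq_coe, hrot] at hC ⊢
  have hchain : (l₂ ++ (l₁ ++ [a])).IsChain G.Adj :=
    ((Cycle.chain_ne_nil G.Adj hne).1 hC).tail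
  exact ⟨_, (Walk.ofSupport _ hne hchain).copy rfl (by simp), by simp⟩

variable [DecidableEq V]

lemma next_eq_of_eq_coe_support {p : G.Walk b a} (hp : C = p.support) (hs : C.Nodup)
    (ha : a ∈ C) : C.next hs a ha = b := by
  subst hp
  have hnext := List.next_getLast_eq_head p.support p.support_ne_nil (Cycle.nodup_coe_iff.1 hs)
  simp only [p.getLast_support, p.head_support] at hnext
  exact hnext

lemma exists_walk_next (hs : C.Nodup) (hC : C.Chain G.Adj) (ha : a ∈ C) :
    ∃ p : G.Walk (C.next hs a ha) a, C = p.support := by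
  obtain ⟨b, p, hp⟩ := exists_walk_eq_coe_support hC ha
  exact ⟨p.copy (next_eq_of_eq_coe_support hp hs ha).symm rfl, by rwa [p.support_copy]⟩

lemma exists_walk_next_walk_next (hs : C.Nodup) (hC : C.Chain G.Adj) (ha : a ∈ C) (hb : b ∈ C)
    (hab : a ≠ b) : ∃ (p : G.Walk (C.next hs a ha) b) (q : G.Walk (C.next hs b hb) a),
      C = (p.support ++ q.support : List V) := by
  obtain ⟨c, r, hr⟩ := exists_walk_eq_coe_support hC ha
  have hac : G.Adj a c := (chain_coe_support_iff r).1 (hr ▸ hC)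
  have hbr : b ∈ r.support := Cycle.mem_coe_iff.1 (hr ▸ hb)
  obtain ⟨d, hbd, q, hq⟩ := (r.dropUntil b hbr).exists_eq_cons_of_ne hab.symm
  let p : G.Walk c b := r.takeUntil b hbr
  have hcut : C = (p.support ++ q.support : List V) := by
    rw [hr, ← congrArg Walk.support (r.take_spec hbr), Walk.support_append, hq,
      Walk.support_cons, List.tail_cons]
  have hrot : C = (q.append (.cons hac p)).support := by
    rw [hcut, Walk.support_append, Walk.support_cons, List.tail_cons, Cycle.coe_eq_coe]
    exact List.isRotated_append
  exact ⟨p.copy (next_eq_of_eq_coe_support hr hs ha).symm rfl,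
    q.copy (next_eq_of_eq_coe_support hrot hs hb).symm rfl, by simpa only [Walk.support_copy]⟩

lemma eq_of_next_eq_next (hs : C.Nodup) (ha : a ∈ C) (hb : b ∈ C)
    (h : C.next hs a ha = C.next hs b hb) : a = b := by
  rw [← C.prev_next hs a ha, ← C.prev_next hs b hb]
  congr 1

variable [Fintype V]

lemma isHamiltonian_of_forall_mem_cycle (hV : 3 ≤ Fintype.card V) (hs : C.Nodup)
    (hC : C.Chain G.Adj) (hmem : ∀ v, v ∈ C) : G.IsHamiltonian := by
  intro _
  obtain ⟨a⟩ : Nonempty V := Fintype.card_pos_iff.1 (by omega)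
  obtain ⟨b, p, hp⟩ := exists_walk_eq_coe_support hC (hmem a)
  have hadj : G.Adj a b := (chain_coe_support_iff p).1 (hp ▸ hC)
  have hpath : p.IsPath := p.isPath_def.2 (Cycle.nodup_coe_iff.1 (hp ▸ hs))
  have hham : p.IsHamiltonian :=
    hpath.isHamiltonian_of_mem fun v ↦ Cycle.mem_coe_iff.1 (hp ▸ hmem v)
  have hcycle : (Walk.cons hadj p).IsCycle := by
    refine Walk.isCycle_iff_isPath_tail_and_le_length.2 ⟨by simpa using hpath, ?_⟩
    rw [Walk.length_cons, hham.length_eq]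
    omega
  exact ⟨a, .cons hadj p, Walk.isHamiltonianCycle_iff_isCycle_and_length_eq.2
    ⟨hcycle, by rw [Walk.length_cons, hham.length_eq]; omega⟩⟩

end Cycles

/-- A longest cycle of `G`, as a cyclic sequence of vertices. An edge counts as a cycle of length
two, and an empty sequence as a cycle of length zero, so that longest cycles always exist. -/
structure IsLongestCycle {V : Type*} (G : SimpleGraph V) (C : Cycle V) : Prop where
  nodup : C.Nodup
  chain : C.Chain G.Adj
  length_le (D : Cycle V) (hs : D.Nodup) (hD : D.Chain G.Adj) : D.length ≤ C.length

/-- The vertex `a` is adjacent to the component of `x` in the subgraph induced on the vertices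
outside of `C`. The component is described by walks of `G` avoiding `C`. -/
def IsAttached {V : Type*} (G : SimpleGraph V) (C : Cycle V) (x a : V) : Prop :=
  ∃ (y : V) (p : G.Walk x y), (∀ v ∈ p.support, v ∉ C) ∧ G.Adj y a

section LongestCycles

open SimpleGraph

variable {V : Type*} {G : SimpleGraph V} {C : Cycle V} {u v x y a b : V}

lemma exists_isLongestCycle [Finite V] (G : SimpleGraph V) : ∃ C, IsLongestCycle G C := by
  classical
  have := Fintype.ofFinite V
  have hfin : {D : Cycle V | D.Nodup ∧ D.Chain G.Adj}.Finite :=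
    (Set.finite_coe_iff.1 (Finite.of_fintype {D : Cycle V // D.Nodup})).subset fun _ hD ↦ hD.1
  obtain ⟨C, ⟨hs, hC⟩, hmax⟩ := Set.exists_max_image _ Cycle.length hfin
    ⟨Cycle.nil, Cycle.nodup_nil, trivial⟩
  exact ⟨C, hs, hC, fun D hDs hD ↦ hmax D ⟨hDs, hD⟩⟩

namespace IsLongestCycle

lemma length_support_le (hC : IsLongestCycle G C) {p : G.Walk u v} (hp : p.IsPath)
    (hvu : G.Adj v u) : p.support.length ≤ C.length :=
  hC.length_le _ (Cycle.nodup_coe_iff.2 hp.support_nodup) ((chain_coe_support_iff p).2 hvu)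

lemma exists_mem (hC : IsLongestCycle G C) (huv : G.Adj u v) : ∃ a, a ∈ C := by
  have hlen := hC.length_support_le (Path.singleton huv).2 huv.symm
  induction C using Quotient.inductionOn' with
  | h l => exact List.exists_mem_of_length_pos (by simp_all; omega)

end IsLongestCycle

lemma exists_isAttached_mem_support (p : G.Walk x y) (hx : x ∉ C) (hy : y ∈ C) :
    ∃ a ∈ p.support, a ∈ C ∧ IsAttached G C x a := by
  induction p with
  | nil => exact absurd hy hx
  | @cons x z y hxz p ih =>
    by_cases hz : z ∈ C
    · exact ⟨z, by simp, hz, x, .nil, by simpa, hxz⟩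
    · obtain ⟨a, ha, haC, w, q, hq, hwa⟩ := ih hz hy
      exact ⟨a, by simp [ha], haC, w, .cons hxz q, by simp_all, hwa⟩

namespace IsAttached

lemma exists_isPath (ha : IsAttached G C x a) (hb : IsAttached G C x b) :
    ∃ (u w : V) (p : G.Walk u w), p.IsPath ∧ (∀ v ∈ p.support, v ∉ C) ∧ G.Adj a u ∧ G.Adj w b := by
  classical
  obtain ⟨u, p, hp, hua⟩ := ha
  obtain ⟨w, q, hq, hwb⟩ := hb
  refine ⟨u, w, (p.reverse.append q).bypass, Walk.bypass_isPath _, fun v hv ↦ ?_, hua.symm, hwb⟩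
  have hv' := Walk.support_bypass_subset_support _ hv
  rw [Walk.mem_support_append_iff, Walk.support_reverse, List.mem_reverse] at hv'
  exact hv'.elim (hp v) (hq v)

variable [DecidableEq V]

-- Otherwise a path outside of `C` joining `a` to its successor could be inserted between them.
lemma not_isAttached_next (hC : IsLongestCycle G C) (haC : a ∈ C) (ha : IsAttached G C x a) :
    ¬ IsAttached G C x (C.next hC.nodup a haC) := by
  intro hb
  obtain ⟨p, hp⟩ := exists_walk_next hC.nodup hC.chain haC
  obtain ⟨u, w, l, hl, hlC, hau, hwb⟩ := ha.exists_isPath hb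
  have hsupp : (p.append (.cons hau l)).support = p.support ++ l.support := by
    rw [Walk.support_append, Walk.support_cons, List.tail_cons]
  have hpath : (p.append (.cons hau l)).IsPath := by
    have hs := hC.nodup
    rw [Walk.isPath_def, hsupp]
    rw [hp, Cycle.nodup_coe_iff] at hs
    refine hs.append hl.support_nodup fun v hvp hvl ↦ hlC v hvl ?_
    rw [hp]
    exact hvp
  have hle := hC.length_support_le hpath hwb
  have hlen : C.length = p.support.length := congrArg Cycle.length hp
  rw [hsupp, List.length_append, Walk.length_support l] at hle
  omega

-- Otherwise, with `a⁺` and `b⁺` the successors, the cycle `a⁺ ⇝ b ⇝ a ⇝ b⁺ → a⁺` which follows `C`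
-- from `a⁺` to `b`, a path outside of `C` to `a`, and `C` backwards from `a` to `b⁺`, would be
-- longer than `C`.
lemma not_adj_next_next (hC : IsLongestCycle G C) (haC : a ∈ C) (hbC : b ∈ C)
    (ha : IsAttached G C x a) (hb : IsAttached G C x b) :
    ¬ G.Adj (C.next hC.nodup a haC) (C.next hC.nodup b hbC) := by
  intro hadj
  have hab : a ≠ b := by
    rintro rfl
    exact G.irrefl hadj
  obtain ⟨p, q, hpq⟩ := exists_walk_next_walk_next hC.nodup hC.chain haC hbC hab
  obtain ⟨u, w, l, hl, hlC, hbu, hwa⟩ := hb.exists_isPath ha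
  let r := p.append (.cons hbu (l.append (.cons hwa q.reverse)))
  have hsupp : r.support = p.support ++ (l.support ++ q.support.reverse) := by
    simp only [r, Walk.support_append, Walk.support_cons, List.tail_cons, Walk.support_reverse]
  have hpath : r.IsPath := by
    have hs := hC.nodup
    rw [hpq, Cycle.nodup_coe_iff] at hs
    have hdisj : ∀ v ∈ l.support, v ∉ p.support ++ q.support := by
      intro v hv
      rw [← Cycle.mem_coe_iff, ← hpq]
      exact hlC v hv
    rw [Walk.isPath_def, hsupp]
    have := hl.support_nodup
    grind
  have hle := hC.length_support_le hpath hadj.symm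
  have hlen : C.length = (p.support ++ q.support).length := congrArg Cycle.length hpq
  rw [hsupp] at hle
  simp only [List.length_append, List.length_reverse, Walk.length_support l] at hle hlen
  omega

end IsAttached

lemma IsLongestCycle.exists_isNIndepSet (hC : IsLongestCycle G C) (hx : x ∉ C) {N : Finset V}
    (hN : ∀ a ∈ N, a ∈ C ∧ IsAttached G C x a) : ∃ J, G.IsNIndepSet (#N + 1) J := by
  classical
  let f : N → V := fun a ↦ C.next hC.nodup a (hN a a.2).1
  have hf : f.Injective := fun a b hab ↦ Subtype.ext (eq_of_next_eq_next _ _ _ hab)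
  have hxf (a : N) : x ≠ f a := fun h ↦ hx (h ▸ C.next_mem hC.nodup _ _)
  have hxadj (a : N) : ¬ G.Adj x (f a) := fun h ↦
    (hN a a.2).2.not_isAttached_next hC _ ⟨x, .nil, by simpa, h⟩
  have hadj (a b : N) : ¬ G.Adj (f a) (f b) :=
    IsAttached.not_adj_next_next hC _ _ (hN a a.2).2 (hN b b.2).2
  have : Std.Symm fun u v ↦ ¬ G.Adj u v := ⟨fun _ _ h h' ↦ h h'.symm⟩
  refine ⟨insert x (univ.image f), ?_, ?_⟩
  · rw [coe_insert, coe_image, coe_univ, Set.image_univ, IsIndepSet,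
      Set.pairwise_insert_of_symm]
    refine ⟨?_, ?_⟩
    · rintro _ ⟨a, rfl⟩ _ ⟨b, rfl⟩ -
      exact hadj a b
    · rintro _ ⟨a, rfl⟩ -
      exact hxadj a
  · rw [card_insert_of_notMem (by simpa [eq_comm] using hxf), card_image_of_injective _ hf,
      card_univ, Fintype.card_coe]

end LongestCycles

section Connectivity

open SimpleGraph

variable {V : Type*} [Fintype V] {G : SimpleGraph V} {k : ℕ} {C : Cycle V} {u v x : V}

namespace IsKConnected

lemma exists_walk (hG : IsKConnected G k) {S : Finset V} (hS : #S < k) (hu : u ∉ S)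
    (hv : v ∉ S) : ∃ p : G.Walk u v, ∀ w ∈ p.support, w ∉ S := by
  obtain ⟨p⟩ := (hG.2 S hS).preconnected ⟨u, by simpa⟩ ⟨v, by simpa⟩
  refine ⟨p.map (Embedding.induce _).toHom, fun w hw ↦ ?_⟩
  obtain ⟨⟨w, hwS⟩, -, rfl⟩ := List.mem_map.1 (Walk.support_map _ p ▸ hw)
  simpa using hwS

lemma le_degree [DecidableRel G.Adj] (hG : IsKConnected G k) (v : V) : k ≤ G.degree v := by
  classical
  by_contra! hlt
  have hcard : #(insert v (G.neighborFinset v)) < Fintype.card V :=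
    (card_insert_le _ _).trans_lt <| by
      rw [card_neighborFinset_eq_degree]
      exact (Nat.succ_le_of_lt hlt).trans_lt hG.1
  obtain ⟨w, -, hw⟩ := exists_mem_notMem_of_card_lt_card (t := univ) hcard
  rw [mem_insert, not_or] at hw
  obtain ⟨p, hp⟩ := hG.exists_walk hlt (by simp : v ∉ G.neighborFinset v) hw.2
  obtain ⟨z, hvz, q, rfl⟩ := p.exists_eq_cons_of_ne (Ne.symm hw.1)
  exact hp z (by simp) (by simpa)

lemma exists_adj (hG : IsKConnected G k) (hk : k ≠ 0) (v : V) : ∃ w, G.Adj v w := by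
  classical
  exact (G.degree_pos_iff_exists_adj v).1 (by have := hG.le_degree v; omega)

lemma le_card_of_forall_mem_iff_isAttached (hG : IsKConnected G k) (hC : IsLongestCycle G C)
    (hx : x ∉ C) {c : V} (hc : c ∈ C) {N : Finset V}
    (hN : ∀ a, a ∈ N ↔ a ∈ C ∧ IsAttached G C x a) : k ≤ #N := by
  classical
  by_contra! hlt
  obtain ⟨d, hdC, hdN⟩ : ∃ d ∈ C, d ∉ N := by
    by_cases hcN : c ∈ N
    · refine ⟨C.next hC.nodup c hc, C.next_mem _ _ _, fun h ↦ ?_⟩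
      exact ((hN c).1 hcN).2.not_isAttached_next hC hc ((hN _).1 h).2
    · exact ⟨c, hc, hcN⟩
  obtain ⟨p, hp⟩ := hG.exists_walk hlt (fun h ↦ hx ((hN x).1 h).1) hdN
  obtain ⟨a, hap, ha⟩ := exists_isAttached_mem_support p hx hdC
  exact hp a hap ((hN a).2 ha)

end IsKConnected

lemma IsKConnected.exists_isNIndepSet_of_not_isHamiltonian [DecidableEq V] (hG : IsKConnected G k)
    (hk : k ≠ 0) (hV : 3 ≤ Fintype.card V) (hham : ¬ G.IsHamiltonian) :
    ∃ I, G.IsNIndepSet (k + 1) I := by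
  classical
  obtain ⟨C, hC⟩ := exists_isLongestCycle G
  obtain ⟨x, hx⟩ : ∃ x, x ∉ C := by
    by_contra! hmem
    exact hham (isHamiltonian_of_forall_mem_cycle hV hC.nodup hC.chain hmem)
  obtain ⟨y, hxy⟩ := hG.exists_adj hk x
  obtain ⟨c, hc⟩ := hC.exists_mem hxy
  let N : Finset V := {a | a ∈ C ∧ IsAttached G C x a}
  have hN (a : V) : a ∈ N ↔ a ∈ C ∧ IsAttached G C x a := by simp [N]
  obtain ⟨J, hJ⟩ := hC.exists_isNIndepSet hx fun a ↦ (hN a).1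
  obtain ⟨I, hIJ, hI⟩ : ∃ I ⊆ J, #I = k + 1 :=
    exists_subset_card_eq <| hJ.2.symm ▸
      Nat.succ_le_succ (hG.le_card_of_forall_mem_iff_isAttached hC hx hc hN)
  exact ⟨I, hJ.1.mono (coe_subset.2 hIJ), hI⟩

end Connectivity

section ExtremalGraphs

open SimpleGraph

variable {V : Type*} [Fintype V] [DecidableEq V] {G : SimpleGraph V} {A : Finset V} {m : ℕ}

lemma isHamiltonian_of_periodic (hV : 3 ≤ Fintype.card V) {f : ℕ → V} (hf : f.Surjective)
    (hper : f.Periodic (Fintype.card V)) (hadj : ∀ j, G.Adj (f j) (f (j + 1))) :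
    G.IsHamiltonian := by
  have himage : (range (Fintype.card V)).image f = univ := eq_univ_of_forall fun v ↦ by
    obtain ⟨j, rfl⟩ := hf v
    exact mem_image.2
      ⟨j % Fintype.card V, mem_range.2 (Nat.mod_lt _ (by omega)), hper.map_mod_nat j⟩
  have hinj : Set.InjOn f (range (Fintype.card V)) :=
    injOn_of_card_image_eq (by rw [himage, card_univ, card_range])
  refine isHamiltonian_of_forall_mem_cycle (C := ((List.range (Fintype.card V)).map f : List V)) hV
    ?_ ?_ ?_
  · refine Cycle.nodup_coe_iff.2 (List.nodup_range.map_on fun i hi j hj h ↦ hinj ?_ ?_ h)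
    · simpa using hi
    · simpa using hj
  · obtain ⟨n, hn⟩ : ∃ n, Fintype.card V = n + 1 := Nat.exists_eq_succ_of_ne_zero (by omega)
    rw [hn] at hper ⊢
    rw [← Cycle.map_coe, Cycle.chain_map, Cycle.chain_range_succ, ← hper 0]
    exact ⟨by simpa using hadj n, fun j _ ↦ hadj j⟩
  · intro v
    obtain ⟨j, hj, rfl⟩ := mem_image.1 (himage ▸ mem_univ v)
    exact Cycle.mem_coe_iff.2 (List.mem_map_of_mem (by simpa using hj))

lemma isHamiltonian_of_alternating (hm : 2 ≤ m) (hV : Fintype.card V = 2 * m) {a c : ZMod m → V}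
    (hac : ∀ v, (∃ i, a i = v) ∨ ∃ i, c i = v) (hadj : ∀ i, G.Adj (a i) (c i))
    (hadj' : ∀ i, G.Adj (c i) (a (i + 1))) : G.IsHamiltonian := by
  have : NeZero m := ⟨by omega⟩
  let f : ℕ → V := fun j ↦ if Even j then a (j / 2 : ℕ) else c (j / 2 : ℕ)
  have hfa (i : ℕ) : f (2 * i) = a i := by simp [f]
  have hfc (i : ℕ) : f (2 * i + 1) = c i := by simp [f, Nat.mul_add_div]
  refine isHamiltonian_of_periodic (f := f) (by omega) (fun v ↦ ?_) (fun j ↦ ?_) fun j ↦ ?_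
  · obtain ⟨i, rfl⟩ | ⟨i, rfl⟩ := hac v
    · exact ⟨2 * i.val, by rw [hfa, ZMod.natCast_zmod_val]⟩
    · exact ⟨2 * i.val + 1, by rw [hfc, ZMod.natCast_zmod_val]⟩
  · obtain ⟨i, rfl | rfl⟩ := Nat.even_or_odd' j
    · rw [hV, ← mul_add, hfa, hfa, Nat.cast_add, ZMod.natCast_self, add_zero]
    · rw [hV, add_right_comm, ← mul_add, hfc, hfc, Nat.cast_add, ZMod.natCast_self, add_zero]
  · obtain ⟨i, rfl | rfl⟩ := Nat.even_or_odd' j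
    · rw [hfa, hfc]
      exact hadj i
    · rw [hfc, show 2 * i + 1 + 1 = 2 * (i + 1) by ring, hfa, Nat.cast_succ]
      exact hadj' i

lemma isHamiltonian_of_crown (hA : 3 ≤ #A) (e : A ≃ (Aᶜ : Finset V))
    (hadj : ∀ a b, b ≠ e a → G.Adj a b) : G.IsHamiltonian := by
  have hcard : #Aᶜ = #A := by simpa only [Fintype.card_coe] using (Fintype.card_congr e).symm
  have : NeZero #A := ⟨by omega⟩
  have hne {j : ℕ} (h0 : 0 < j) (hj : j < #A) : (j : ZMod #A) ≠ 0 :=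
    (ZMod.natCast_eq_zero_iff j #A).not.2 (Nat.not_dvd_of_pos_of_lt h0 hj)
  have h1 : (1 : ZMod #A) ≠ 0 := by simpa using hne one_pos (by omega)
  have h2 : (2 : ZMod #A) ≠ 0 := by simpa using hne two_pos (by omega)
  let σ : ZMod #A ≃ A := Fintype.equivOfCardEq (by rw [ZMod.card, Fintype.card_coe])
  have hσ {i j : ZMod #A} (hij : i ≠ j) : G.Adj (σ i) (e (σ j)) :=
    hadj _ _ fun h ↦ hij (σ.injective (e.injective h)).symm
  refine isHamiltonian_of_alternating (a := fun i ↦ σ i) (c := fun i ↦ e (σ (i + 2)))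
    (by omega : 2 ≤ #A) (by rw [← card_add_card_compl A]; omega) (fun v ↦ ?_)
    (fun i ↦ hσ (by simpa using h2)) fun i ↦ (hσ fun h ↦ h1 ?_).symm
  · by_cases hv : v ∈ A
    · exact .inl ⟨σ.symm ⟨v, hv⟩, by simp⟩
    · exact .inr ⟨σ.symm (e.symm ⟨v, mem_compl.2 hv⟩) - 2, by simp⟩
  · linear_combination -h

lemma exists_equiv_of_biUnique {α β : Type*} [Fintype α] [Fintype β] {R : α → β → Prop}
    (hR : Relator.BiUnique R) (hcard : Fintype.card α = Fintype.card β) :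
    ∃ e : α ≃ β, ∀ a b, R a b → e a = b := by
  classical
  rcases isEmpty_or_nonempty β with _ | _
  · exact ⟨Fintype.equivOfCardEq hcard, fun _ b ↦ isEmptyElim b⟩
  let f : α → β := fun a ↦ Classical.epsilon (R a)
  have hf {a : α} {b : β} (hab : R a b) : R a (f a) := Classical.epsilon_spec ⟨b, hab⟩
  have hinj : Set.InjOn f {a | ∃ b, R a b} := fun a ⟨_, ha⟩ a' ⟨_, ha'⟩ h ↦
    hR.1 (hf ha) (h ▸ hf ha')
  obtain ⟨e, he⟩ := Set.MapsTo.exists_equiv_extend_of_card_eq (t := univ)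
    (hcard.trans card_univ.symm) (fun _ _ ↦ mem_coe.2 (mem_univ _)) hinj
  exact ⟨e.trans (Equiv.subtypeUnivEquiv mem_univ), fun a b hab ↦
    (he a ⟨b, hab⟩).trans (hR.2 (hf hab) hab)⟩

lemma eq_of_not_adj_of_card_compl_le [DecidableRel G.Adj] (hA : G.IsIndepSet A) {a b c : V}
    (ha : a ∈ A) (hdeg : #Aᶜ ≤ G.degree a + 1) (hb : b ∉ A) (hc : c ∉ A) (hab : ¬ G.Adj a b)
    (hac : ¬ G.Adj a c) : b = c := by
  have hsub : G.neighborFinset a ⊆ Aᶜ := fun v hv ↦ by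
    rw [mem_neighborFinset] at hv
    exact mem_compl.2 fun hvA ↦ hA ha hvA hv.ne hv
  have hle : #(Aᶜ \ G.neighborFinset a) ≤ 1 := by
    rw [card_sdiff_of_subset hsub, card_neighborFinset_eq_degree]
    omega
  exact card_le_one.1 hle b (by simp [hb, hab]) c (by simp [hc, hac])

-- Each vertex has at most one nonneighbour in the other part, so that `G` contains a complete
-- balanced bipartite graph from which a perfect matching has been removed.
lemma isHamiltonian_of_isIndepSet_compl [DecidableRel G.Adj] (h3 : 3 ≤ #A) (hcard : #Aᶜ = #A)
    (hA : G.IsIndepSet A) (hA' : G.IsIndepSet (Aᶜ : Finset V))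
    (hdeg : ∀ v, #A ≤ G.degree v + 1) : G.IsHamiltonian := by
  let R : A → (Aᶜ : Finset V) → Prop := fun a b ↦ ¬ G.Adj a b
  have hR : Relator.BiUnique R := by
    refine ⟨fun a a' b hab ha'b ↦ Subtype.ext ?_, fun a b b' hab hab' ↦ Subtype.ext ?_⟩
    · exact eq_of_not_adj_of_card_compl_le hA' b.2 (by simpa using hdeg b) (by simp) (by simp)
        (G.adj_comm _ _ |>.not.1 hab) (G.adj_comm _ _ |>.not.1 ha'b)
    · exact eq_of_not_adj_of_card_compl_le hA a.2 (hcard ▸ hdeg a) (mem_compl.1 b.2)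
        (mem_compl.1 b'.2) hab hab'
  obtain ⟨e, he⟩ := exists_equiv_of_biUnique hR (by simp only [Fintype.card_coe, hcard])
  exact isHamiltonian_of_crown h3 e fun a b hb ↦ by_contra fun h ↦ hb (he a b h).symm

end ExtremalGraphs

section DegreeSums

open SimpleGraph

variable {V : Type*} [Fintype V] {G : SimpleGraph V} [DecidableRel G.Adj] {I : Finset V}

lemma sum_degree_eq_card_biUnion_incidenceFinset_s6 [DecidableEq V] (hI : G.IsIndepSet I) :
    ∑ v ∈ I, G.degree v = #(I.biUnion fun v ↦ G.incidenceFinset v) := by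
  rw [card_biUnion]
  · simp only [card_incidenceFinset_eq_degree]
  · refine fun u hu v hv huv ↦ disjoint_left.2 fun e heu hev ↦ ?_
    rw [mem_incidenceFinset] at heu hev
    exact hI hu hv huv (G.adj_of_mem_incidenceSet huv heu hev)

lemma biUnion_incidenceFinset_subset_edgeFinset_s6 [DecidableEq V] :
    (I.biUnion fun v ↦ G.incidenceFinset v) ⊆ G.edgeFinset :=
  biUnion_subset.2 fun v _ ↦ G.incidenceFinset_subset v

lemma sum_degree_le_card_edgeFinset (hI : G.IsIndepSet I) :
    ∑ v ∈ I, G.degree v ≤ #G.edgeFinset := by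
  classical
  exact (sum_degree_eq_card_biUnion_incidenceFinset_s6 hI).trans_le
    (card_le_card biUnion_incidenceFinset_subset_edgeFinset_s6)

lemma isIndepSet_compl_of_sum_degree_eq [DecidableEq V] (hI : G.IsIndepSet I)
    (hsum : ∑ v ∈ I, G.degree v = #G.edgeFinset) : G.IsIndepSet (Iᶜ : Finset V) := by
  rw [sum_degree_eq_card_biUnion_incidenceFinset_s6 hI] at hsum
  have hedges := eq_of_subset_of_card_le biUnion_incidenceFinset_subset_edgeFinset_s6 hsum.ge
  intro u hu v hv _ huv
  obtain ⟨w, hw, huvw⟩ := mem_biUnion.1 (hedges ▸ mem_edgeFinset.2 (G.mem_edgeSet.2 huv))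
  rw [mem_incidenceFinset, mk'_mem_incidenceSet_iff] at huvw
  rw [mem_coe, mem_compl] at hu hv
  rcases huvw.2 with rfl | rfl
  · exact hu hw
  · exact hv hw

lemma zagreb1_le_of_isIndepSet (hI : G.IsIndepSet I) :
    zagreb1 G ≤ ((Fintype.card V : ℝ) - #I) * G.maxDegree ^ 2 + G.maxDegree * #G.edgeFinset := by
  classical
  have hcompl : ∑ v ∈ Iᶜ, (G.degree v : ℝ) ^ 2 ≤
      ((Fintype.card V : ℝ) - #I) * G.maxDegree ^ 2 := by
    rw [← card_univ, ← cast_card_sdiff (subset_univ I), ← compl_eq_univ_sdiff, ← nsmul_eq_mul]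
    exact sum_le_card_nsmul _ _ _ fun v _ ↦ by gcongr; exact G.degree_le_maxDegree v
  have hindep : ∑ v ∈ I, (G.degree v : ℝ) ^ 2 ≤ G.maxDegree * #G.edgeFinset :=
    calc ∑ v ∈ I, (G.degree v : ℝ) ^ 2 ≤ ∑ v ∈ I, (G.maxDegree : ℝ) * G.degree v :=
          sum_le_sum fun v _ ↦ by rw [sq]; gcongr; exact G.degree_le_maxDegree v
      _ = G.maxDegree * (∑ v ∈ I, G.degree v : ℕ) := by rw [← mul_sum, Nat.cast_sum]
      _ ≤ G.maxDegree * #G.edgeFinset := by gcongr; exact sum_degree_le_card_edgeFinset hI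
  rw [zagreb1, ← sum_compl_add_sum I]
  exact add_le_add hcompl hindep

lemma isHamiltonian_of_isRegularOfDegree_of_isNIndepSet [DecidableEq V] {m r : ℕ} (hm : 3 ≤ m)
    (hmr : m ≤ r + 1) (hG : G.IsRegularOfDegree r) (hI : G.IsNIndepSet m I)
    (he : #G.edgeFinset = m * r) : G.IsHamiltonian := by
  have hV : Fintype.card V = 2 * m := by
    have hsum := G.sum_degrees_eq_twice_card_edges
    rw [sum_congr rfl fun v _ ↦ hG v, sum_const, card_univ, smul_eq_mul, he, ← mul_assoc] at hsum
    exact Nat.eq_of_mul_eq_mul_right (by omega) hsum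
  have hI' : G.IsIndepSet (Iᶜ : Finset V) := by
    refine isIndepSet_compl_of_sum_degree_eq hI.1 ?_
    rw [sum_congr rfl fun v _ ↦ hG v, sum_const, smul_eq_mul, hI.2, he]
  refine isHamiltonian_of_isIndepSet_compl (by rwa [hI.2]) ?_ hI.1 hI' fun v ↦ ?_
  · rw [card_compl, hV, hI.2]
    omega
  · rwa [hI.2, hG v]

end DegreeSums

lemma eq_and_eq_mul_of_div_add_div_le {K : Type*} [Field K] [LinearOrder K] [IsStrictOrderedRing K]
    {m d D e : K} (hm : 0 < m) (hd : 0 < d) (hdD : d ≤ D)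
    (h : e ^ 2 / (2 * m) + m * D ^ 3 / (2 * d) ≤ D * e) : D = d ∧ e = m * D := by
  have hD : 0 < D := hd.trans_le hdD
  have hdiff : e ^ 2 / (2 * m) + m * D ^ 3 / (2 * d) - D * e =
      (e - m * D) ^ 2 / (2 * m) + m * D ^ 2 * (D - d) / (2 * d) := by
    field_simp
    ring
  have hsq : 0 ≤ (e - m * D) ^ 2 / (2 * m) := by positivity
  have hcube : 0 ≤ m * D ^ 2 * (D - d) / (2 * d) := by
    have := sub_nonneg.2 hdD
    positivity
  have hsq0 : (e - m * D) ^ 2 / (2 * m) = 0 := by linarith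
  have hcube0 : m * D ^ 2 * (D - d) / (2 * d) = 0 := by linarith
  constructor
  · simpa [hm.ne', hd.ne', hD.ne', sub_eq_zero] using hcube0
  · simpa [hm.ne', sub_eq_zero] using hsq0

/-- If `G` is a `k`-connected (`k ≥ 2`) graph with `n ≥ 3` vertices, `e` edges, minimum
degree `δ`, and maximum degree `Δ`, and `Z₁(G) ≥ (n − k − 1)Δ² + e²/(2(k+1)) + (k+1)Δ³/(2δ)`,
then `G` is Hamiltonian. -/
theorem stmt6 {V : Type*} [Fintype V] [DecidableEq V] (G : SimpleGraph V) [DecidableRel G.Adj]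
    (k : ℕ) (hk : 2 ≤ k) (hconn : IsKConnected G k) (hn : 3 ≤ Fintype.card V)
    (h : zagreb1 G ≥ ((Fintype.card V : ℝ) - k - 1) * (G.maxDegree : ℝ) ^ 2
        + (G.edgeFinset.card : ℝ) ^ 2 / (2 * ((k : ℝ) + 1))
        + ((k : ℝ) + 1) * (G.maxDegree : ℝ) ^ 3 / (2 * G.minDegree)) :
    G.IsHamiltonian := by
  by_contra hG
  obtain ⟨I, hI⟩ := hconn.exists_isNIndepSet_of_not_isHamiltonian (by omega) hn hG
  have : Nonempty V := Fintype.card_pos_iff.1 (by omega)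
  have hkδ : k ≤ G.minDegree := G.le_minDegree_of_forall_le_degree k hconn.le_degree
  obtain ⟨hΔ, he⟩ : (G.maxDegree : ℝ) = G.minDegree ∧
      (#G.edgeFinset : ℝ) = ((k : ℝ) + 1) * G.maxDegree := by
    refine eq_and_eq_mul_of_div_add_div_le (by positivity) (by norm_cast; omega)
      (by exact_mod_cast G.minDegree_le_maxDegree) ?_
    have hle := zagreb1_le_of_isIndepSet hI.1
    rw [hI.2, Nat.cast_succ, ← sub_sub] at hle
    linarith
  norm_cast at hΔ he
  have hreg : G.IsRegularOfDegree G.maxDegree := fun v ↦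
    le_antisymm (G.degree_le_maxDegree v) (hΔ ▸ G.minDegree_le_degree v)
  exact hG (isHamiltonian_of_isRegularOfDegree_of_isNIndepSet (by omega) (by omega) hreg hI he)
end
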